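/- The brickwork MPUs satisfy U^{(N)}[u,v] = (U^{(N)}[u,v])† for every even N ≥ 2 if and only if there exist a unitary x on ℂ^d⊗ℂ^d and σ ∈ {+1,−1} such that v₂₃ · u₁₂ · u₃₄ = σ · x₁₂ · (x†)₃₄ · (v†)₂₃ as operators on (ℂ^d)^{⊗4}. -/

import Mathlib

/-!
Let `A = v₂₃ u₁₂ u₃₄ v₂₃`. On a ring of `2M` cells (a cell is a pair of spins), group the cells in
consecutive pairs. The layer of `v`'s splits into the bricks inside the blocks and the bricks
joining neighbouring blocks; the latter are the former conjugated by the shift by one cell (`stag`).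
These two kinds of bricks commute, so self-adjointness of the brickwork is equivalent to
`(A†)^{⊗M} = A^{⊗M}` up to that shift (`brickwork_selfAdjoint_iff`).

If `A = σ x ⊗ x†`, both sides are `σ^M` times a staggered product of `x`'s and `x†`'s, which agree.
Conversely, `M = 1` says that `A†` is `A` with its two cells exchanged, and `M = 2` then says that
`A_{ab} A_{ce} = A_{ae} A_{cb}` entrywise in the operator indices of the cells, that is, `A` has
operator Schmidt rank one. Together they give `A = r⁻¹ X ⊗ X†` for a slice `X` of `A` and a
nonzero real `r`, and unitarity of `A` allows `X` to be normalised
(`exists_unitary_of_symm_of_rankOne`).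
-/

open scoped Kronecker Matrix

/-- The cyclic successor on `Fin N`. -/
def nextIdx {N : ℕ} (n : Fin N) : Fin N := ⟨(n.val + 1) % N, Nat.mod_lt _ n.pos⟩

/-- The brickwork MPU `U^{(N)}[u,v]` on a ring of `2N` spins of dimension `d`. -/
noncomputable def brickwork (d : ℕ)
    (u v : Matrix (Fin d × Fin d) (Fin d × Fin d) ℂ) (N : ℕ) :
    Matrix (Fin N → Fin d × Fin d) (Fin N → Fin d × Fin d) ℂ :=
  Matrix.of fun x y =>
    ∑ z : Fin N → Fin d × Fin d,
      (∏ n : Fin N, v ((x n).2, (x (nextIdx n)).1) ((z n).2, (z (nextIdx n)).1)) *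
      (∏ n : Fin N, u (z n) (y n))

/-- `w₁₂ = w ⊗ 1 ⊗ 1` acting on the first two of four factors. -/
noncomputable def lay12 {α : Type*} [Fintype α] [DecidableEq α]
    (w : Matrix (α × α) (α × α) ℂ) :
    Matrix ((α × α) × α × α) ((α × α) × α × α) ℂ :=
  w ⊗ₖ (1 : Matrix (α × α) (α × α) ℂ)

/-- `w₃₄ = 1 ⊗ 1 ⊗ w` acting on the last two of four factors. -/
noncomputable def lay34 {α : Type*} [Fintype α] [DecidableEq α]
    (w : Matrix (α × α) (α × α) ℂ) :
    Matrix ((α × α) × α × α) ((α × α) × α × α) ℂ :=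
  (1 : Matrix (α × α) (α × α) ℂ) ⊗ₖ w

/-- `w₂₃ = 1 ⊗ w ⊗ 1` acting on the middle two of four factors. -/
noncomputable def lay23 {α : Type*} [Fintype α] [DecidableEq α]
    (w : Matrix (α × α) (α × α) ℂ) :
    Matrix ((α × α) × α × α) ((α × α) × α × α) ℂ :=
  Matrix.of fun p q =>
    if p.1.1 = q.1.1 ∧ p.2.2 = q.2.2 then w (p.1.2, p.2.1) (q.1.2, q.2.1) else 0

/-! ### Tensor powers and the shift by one cell -/

/-- The tensor power `A^{⊗κ}`, as a matrix on configurations `κ → I`. -/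
noncomputable def piMat {I : Type*} (κ : Type*) [Fintype κ] (A : Matrix I I ℂ) :
    Matrix (κ → I) (κ → I) ℂ :=
  Matrix.of fun x y => ∏ k, A (x k) (y k)

lemma piMat_mul {I κ : Type*} [Fintype I] [Fintype κ] [DecidableEq κ]
    (A B : Matrix I I ℂ) : piMat κ (A * B) = piMat κ A * piMat κ B := by
  ext x y
  simp only [piMat, Matrix.of_apply, Matrix.mul_apply, Finset.prod_univ_sum,
    Fintype.piFinset_univ, Finset.prod_mul_distrib]

lemma piMat_one {I κ : Type*} [DecidableEq I] [Fintype κ] :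
    piMat κ (1 : Matrix I I ℂ) = 1 := by
  classical
  ext x y
  simp only [piMat, Matrix.of_apply, Matrix.one_apply]
  by_cases h : x = y
  · simp [h]
  · obtain ⟨k, hk⟩ := Function.ne_iff.mp h
    rw [if_neg h]
    exact Finset.prod_eq_zero (Finset.mem_univ k) (if_neg hk)

lemma piMat_conjTranspose {I κ : Type*} [Fintype κ] (A : Matrix I I ℂ) :
    (piMat κ A)ᴴ = piMat κ Aᴴ := by
  ext x y
  simp [piMat, Matrix.conjTranspose_apply]

/-- The shift by one cell of configurations of blocks of two cells, where `t` maps a block to the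
next one: block `k` of the result consists of the second cell of block `k` and the first cell of
block `t k`. -/
def stag {I κ : Type*} (t : κ ≃ κ) : (κ → I × I) ≃ (κ → I × I) where
  toFun h k := ((h k).2, (h (t k)).1)
  invFun g k := ((g (t.symm k)).2, (g k).1)
  left_inv h := by funext k; simp
  right_inv h := by funext k; simp

lemma piMat_kronecker_stag {I κ : Type*} [Fintype κ] (t : κ ≃ κ) (a b : Matrix I I ℂ) :
    (piMat κ (a ⊗ₖ b)).submatrix (stag t) (stag t) = piMat κ (b ⊗ₖ a) := by
  ext x y
  simp only [piMat, stag, Matrix.submatrix_apply, Matrix.of_apply, Equiv.coe_fn_mk,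
    Matrix.kroneckerMap_apply, Finset.prod_mul_distrib]
  rw [Equiv.prod_comp t (fun k => b (x k).1 (y k).1), mul_comm]

/-! ### Operators on four spins -/

section lay23

variable {α : Type*} [Fintype α] [DecidableEq α]

/-- Regrouping `1,2,3,4` as `(1,4),(2,3)`, so that `w₂₃` becomes a Kronecker product. -/
def outerInner (α : Type*) : (α × α) × α × α ≃ (α × α) × α × α where
  toFun p := ((p.1.1, p.2.2), (p.1.2, p.2.1))
  invFun p := ((p.1.1, p.2.1), (p.2.2, p.1.2))
  left_inv _ := rfl
  right_inv _ := rfl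

lemma lay23_eq (w : Matrix (α × α) (α × α) ℂ) :
    lay23 w = ((1 : Matrix (α × α) (α × α) ℂ) ⊗ₖ w).submatrix (outerInner α) (outerInner α) := by
  ext p q
  simp [lay23, outerInner, Matrix.one_apply, Prod.ext_iff]

lemma lay23_mul (w w' : Matrix (α × α) (α × α) ℂ) : lay23 (w * w') = lay23 w * lay23 w' := by
  simp only [lay23_eq, Matrix.submatrix_mul_equiv, ← Matrix.mul_kronecker_mul, one_mul]

lemma lay23_one : lay23 (1 : Matrix (α × α) (α × α) ℂ) = 1 := by
  simp only [lay23_eq, Matrix.one_kronecker_one, Matrix.submatrix_one_equiv]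

lemma lay23_conjTranspose (w : Matrix (α × α) (α × α) ℂ) : (lay23 w)ᴴ = lay23 wᴴ := by
  simp only [lay23_eq, Matrix.conjTranspose_submatrix, Matrix.conjTranspose_kronecker,
    Matrix.conjTranspose_one]

lemma lay12_mul_lay34 (w w' : Matrix (α × α) (α × α) ℂ) : lay12 w * lay34 w' = w ⊗ₖ w' := by
  simp only [lay12, lay34, ← Matrix.mul_kronecker_mul, one_mul, mul_one]

end lay23

/-! ### Grouping the cells of the ring in blocks of two -/

lemma nextIdx_injective (M : ℕ) : Function.Injective (nextIdx : Fin M → Fin M) := by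
  intro a b h
  have h' : a.val + 1 ≡ b.val + 1 [MOD M] := congrArg Fin.val h
  have := Nat.ModEq.add_right_cancel' 1 h'
  exact Fin.ext (this.eq_of_lt_of_lt a.2 b.2)

/-- `nextIdx` as a permutation. -/
noncomputable def nextEquiv (M : ℕ) : Fin M ≃ Fin M :=
  Equiv.ofBijective nextIdx (Finite.injective_iff_bijective.mp (nextIdx_injective M))

/-- Splitting a configuration of `2M` cells (indexed from `0`) into blocks of the cells
`2k, 2k+1`; this map goes from block configurations to cell configurations. -/
def unblock (I : Type*) (M : ℕ) : (Fin M → I × I) ≃ (Fin (M * 2) → I) :=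
  ((Equiv.piCongrRight fun _ => (finTwoArrowEquiv I).symm).trans
    (Equiv.curry (Fin M) (Fin 2) I).symm).trans (Equiv.arrowCongr finProdFinEquiv (Equiv.refl I))

lemma unblock_zero {I : Type*} {M : ℕ} (h : Fin M → I × I) (k : Fin M) :
    unblock I M h (finProdFinEquiv (k, 0)) = (h k).1 := by
  simp [unblock, Equiv.arrowCongr, Equiv.curry, finTwoArrowEquiv, Function.uncurry]

lemma unblock_one {I : Type*} {M : ℕ} (h : Fin M → I × I) (k : Fin M) :
    unblock I M h (finProdFinEquiv (k, 1)) = (h k).2 := by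
  simp [unblock, Equiv.arrowCongr, Equiv.curry, finTwoArrowEquiv, Function.uncurry]

lemma nextIdx_zero {M : ℕ} (k : Fin M) :
    nextIdx (finProdFinEquiv (k, (0 : Fin 2))) = finProdFinEquiv (k, 1) := by
  ext
  have := k.2
  simp only [nextIdx, finProdFinEquiv_apply_val, Fin.val_zero, Fin.val_one]
  rw [Nat.mod_eq_of_lt] <;> omega

lemma nextIdx_one {M : ℕ} (k : Fin M) :
    nextIdx (finProdFinEquiv (k, (1 : Fin 2))) = finProdFinEquiv (nextEquiv M k, 0) := by
  ext
  have h : 1 + 2 * k.val + 1 = 2 * (k.val + 1) := by ring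
  simp only [nextIdx, nextEquiv, finProdFinEquiv_apply_val, Fin.val_zero, Fin.val_one,
    Equiv.ofBijective_apply]
  rw [h, mul_comm M 2, Nat.mul_mod_mul_left, zero_add]

lemma prod_blocks {M : ℕ} (f : Fin (M * 2) → ℂ) :
    ∏ n, f n = (∏ k : Fin M, f (finProdFinEquiv (k, 0))) *
      ∏ k : Fin M, f (finProdFinEquiv (k, 1)) := by
  rw [← Equiv.prod_comp finProdFinEquiv f, Fintype.prod_prod_type, ← Finset.prod_mul_distrib]
  simp only [Fin.prod_univ_two]

/-- The layer of `v`'s of the brickwork. -/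
noncomputable def vLayer {d : ℕ} (v : Matrix (Fin d × Fin d) (Fin d × Fin d) ℂ) (N : ℕ) :
    Matrix (Fin N → Fin d × Fin d) (Fin N → Fin d × Fin d) ℂ :=
  Matrix.of fun x z => ∏ n, v ((x n).2, (x (nextIdx n)).1) ((z n).2, (z (nextIdx n)).1)

lemma brickwork_eq {d : ℕ} (u v : Matrix (Fin d × Fin d) (Fin d × Fin d) ℂ) (N : ℕ) :
    brickwork d u v N = vLayer v N * piMat (Fin N) u := by
  ext x y
  simp [brickwork, vLayer, piMat, Matrix.mul_apply]

lemma vLayer_conjTranspose {d : ℕ} (v : Matrix (Fin d × Fin d) (Fin d × Fin d) ℂ) (N : ℕ) :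
    (vLayer v N)ᴴ = vLayer vᴴ N := by
  ext x y
  simp [vLayer, Matrix.conjTranspose_apply]

lemma piMat_unblock {I : Type*} {M : ℕ} (u : Matrix I I ℂ) :
    (piMat (Fin (M * 2)) u).submatrix (unblock I M) (unblock I M) = piMat (Fin M) (u ⊗ₖ u) := by
  ext x y
  simp only [piMat, Matrix.submatrix_apply, Matrix.of_apply, Matrix.kroneckerMap_apply,
    Finset.prod_mul_distrib]
  rw [prod_blocks]
  simp only [unblock_zero, unblock_one]

/-- The `v`'s inside the blocks times the `v`'s joining neighbouring blocks make up the layer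
of `v`'s. -/
lemma vLayer_unblock {d M : ℕ} (v : Matrix (Fin d × Fin d) (Fin d × Fin d) ℂ) :
    (vLayer v (M * 2)).submatrix (unblock _ M) (unblock _ M) =
      piMat (Fin M) (lay23 v) *
        (piMat (Fin M) (lay23 v)).submatrix (stag (nextEquiv M)) (stag (nextEquiv M)) := by
  ext x y
  simp only [vLayer, Matrix.submatrix_apply, Matrix.of_apply, Matrix.mul_apply]
  rw [prod_blocks]
  simp only [nextIdx_zero, nextIdx_one, unblock_zero, unblock_one, piMat, Matrix.of_apply, lay23,
    stag, Equiv.coe_fn_mk]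
  -- Spins 1 and 4 of a block are untouched by the first factor, spins 2 and 3 by the second,
  -- so a single intermediate configuration contributes.
  rw [Finset.sum_eq_single (fun k => (((x k).1.1, (y k).1.2), ((y k).2.1, (x k).2.2)))]
  · simp
  · intro z _ hz
    by_contra hne
    obtain ⟨h1, h2⟩ := mul_ne_zero_iff.mp hne
    rw [Finset.prod_ne_zero_iff] at h1 h2
    apply hz
    funext k
    have e1 := (ite_ne_right_iff.mp (h1 k (Finset.mem_univ _))).1
    have e2 := (ite_ne_right_iff.mp (h2 k (Finset.mem_univ _))).1
    have e3 := (ite_ne_right_iff.mp (h2 ((nextEquiv M).symm k) (Finset.mem_univ _))).1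
    simp only [Equiv.apply_symm_apply] at e3
    simp only [Prod.ext_iff]
    exact ⟨⟨e1.1.symm, e3.2⟩, e2.1, e1.2.symm⟩
  · simp

/-! ### Self-adjointness as a condition on `v₂₃ u₁₂ u₃₄ v₂₃` -/

/-- The four-spin operator `v₂₃ u₁₂ u₃₄ v₂₃`. -/
noncomputable def core {d : ℕ} (u v : Matrix (Fin d × Fin d) (Fin d × Fin d) ℂ) :
    Matrix ((Fin d × Fin d) × Fin d × Fin d) ((Fin d × Fin d) × Fin d × Fin d) ℂ :=
  lay23 v * (u ⊗ₖ u) * lay23 v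

lemma lay23_unitary {d : ℕ} {v : Matrix (Fin d × Fin d) (Fin d × Fin d) ℂ}
    (hv : v ∈ Matrix.unitaryGroup (Fin d × Fin d) ℂ) :
    lay23 v * lay23 vᴴ = 1 ∧ lay23 vᴴ * lay23 v = 1 := by
  rw [← lay23_mul, ← lay23_mul]
  constructor
  · rw [← Matrix.star_eq_conjTranspose, Matrix.mem_unitaryGroup_iff.mp hv, lay23_one]
  · rw [← Matrix.star_eq_conjTranspose, Matrix.mem_unitaryGroup_iff'.mp hv, lay23_one]

lemma core_mul_conjTranspose {d : ℕ} {u v : Matrix (Fin d × Fin d) (Fin d × Fin d) ℂ}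
    (hu : u ∈ Matrix.unitaryGroup (Fin d × Fin d) ℂ)
    (hv : v ∈ Matrix.unitaryGroup (Fin d × Fin d) ℂ) :
    core u v * (core u v)ᴴ = 1 := by
  have hu' : (u ⊗ₖ u) * (uᴴ ⊗ₖ uᴴ) = 1 := by
    rw [← Matrix.mul_kronecker_mul, ← Matrix.star_eq_conjTranspose,
      Matrix.mem_unitaryGroup_iff.mp hu, Matrix.one_kronecker_one]
  obtain ⟨h1, -⟩ := lay23_unitary hv
  simp only [core, Matrix.conjTranspose_mul, lay23_conjTranspose, Matrix.conjTranspose_kronecker]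
  calc _ = lay23 v * ((u ⊗ₖ u) * (lay23 v * lay23 vᴴ) * (uᴴ ⊗ₖ uᴴ)) * lay23 vᴴ := by
        simp only [mul_assoc]
    _ = 1 := by rw [h1, mul_one, hu', mul_one, h1]

/-- The cancellation behind `brickwork_selfAdjoint_iff`: `e` and `o` are the two groups of `v`'s,
`w` the layer of `u`'s, and primes denote adjoints. -/
lemma cancel_iff {R : Type*} [Monoid R] {e o w e' o' w' : R}
    (he : e * e' = 1) (he' : e' * e = 1) (ho : o * o' = 1) (ho' : o' * o = 1)
    (hc : e' * o' = o' * e') :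
    w' * (o' * e') = e * o * w ↔ e' * w' * e' = o * w * o := by
  constructor
  · intro h
    calc e' * w' * e' = e' * (w' * (e' * o')) * o := by simp only [mul_assoc, ho', mul_one]
      _ = (e' * e) * (o * w * o) := by rw [hc, h]; simp only [mul_assoc]
      _ = _ := by rw [he', one_mul]
  · intro h
    calc w' * (o' * e') = e * (e' * w' * e') * o' := by
          rw [← hc]; simp only [← mul_assoc, he, one_mul]
      _ = e * o * w * (o * o') := by rw [h]; simp only [mul_assoc]
      _ = _ := by rw [ho, mul_one]

lemma brickwork_selfAdjoint_iff {d M : ℕ} {u v : Matrix (Fin d × Fin d) (Fin d × Fin d) ℂ}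
    (hv : v ∈ Matrix.unitaryGroup (Fin d × Fin d) ℂ) :
    (brickwork d u v (M * 2))ᴴ = brickwork d u v (M * 2) ↔
      piMat (Fin M) (core u v)ᴴ =
        (piMat (Fin M) (core u v)).submatrix (stag (nextEquiv M)) (stag (nextEquiv M)) := by
  set τ := stag (I := Fin d × Fin d) (nextEquiv M) with hτ
  set c := unblock (Fin d × Fin d) M with hc
  have inj : Function.Injective
      (fun B : Matrix (Fin (M * 2) → Fin d × Fin d) (Fin (M * 2) → Fin d × Fin d) ℂ =>
        B.submatrix c c) := (Matrix.reindex c.symm c.symm).injective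
  obtain ⟨h1, h2⟩ := lay23_unitary hv
  set e := piMat (Fin M) (lay23 v) with he
  set e' := piMat (Fin M) (lay23 vᴴ) with he'
  set w := piMat (Fin M) (u ⊗ₖ u) with hw
  set w' := piMat (Fin M) (uᴴ ⊗ₖ uᴴ) with hw'
  have hmul_e : e * e' = 1 := by rw [he, he', ← piMat_mul, h1, piMat_one]
  have hinv_e : e' * e = 1 := by rw [he, he', ← piMat_mul, h2, piMat_one]
  have hmul_o : e.submatrix τ τ * e'.submatrix τ τ = 1 := by
    rw [Matrix.submatrix_mul_equiv, hmul_e, Matrix.submatrix_one_equiv]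
  have hinv_o : e'.submatrix τ τ * e.submatrix τ τ = 1 := by
    rw [Matrix.submatrix_mul_equiv, hinv_e, Matrix.submatrix_one_equiv]
  have es : eᴴ = e' := by rw [he, he', piMat_conjTranspose, lay23_conjTranspose]
  have hV : (vLayer v (M * 2)).submatrix c c = e * e.submatrix τ τ := vLayer_unblock v
  have hV' : (vLayer vᴴ (M * 2)).submatrix c c = e' * e'.submatrix τ τ := vLayer_unblock vᴴ
  -- The two groups of bricks commute: compare the factorisation at `v†` with the adjoint of
  -- the one at `v`.
  have comm : e' * e'.submatrix τ τ = e'.submatrix τ τ * e' := by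
    rw [← hV', ← vLayer_conjTranspose, ← Matrix.conjTranspose_submatrix, hV,
      Matrix.conjTranspose_mul, Matrix.conjTranspose_submatrix, es]
  have hU : (brickwork d u v (M * 2)).submatrix c c = e * e.submatrix τ τ * w := by
    rw [brickwork_eq, ← Matrix.submatrix_mul_equiv _ _ _ c, hV, piMat_unblock]
  have hU' : ((brickwork d u v (M * 2))ᴴ).submatrix c c = w' * (e'.submatrix τ τ * e') := by
    rw [← Matrix.conjTranspose_submatrix, hU, Matrix.conjTranspose_mul, Matrix.conjTranspose_mul,
      Matrix.conjTranspose_submatrix, es, hw, piMat_conjTranspose, Matrix.conjTranspose_kronecker]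
  have hA' : piMat (Fin M) (core u v)ᴴ = e' * w' * e' := by
    rw [core, Matrix.conjTranspose_mul, Matrix.conjTranspose_mul, lay23_conjTranspose,
      Matrix.conjTranspose_kronecker, ← mul_assoc, piMat_mul, piMat_mul]
  have hA : (piMat (Fin M) (core u v)).submatrix τ τ = e.submatrix τ τ * w * e.submatrix τ τ := by
    rw [core, piMat_mul, piMat_mul, ← Matrix.submatrix_mul_equiv _ _ _ τ,
      ← Matrix.submatrix_mul_equiv _ _ _ τ, piMat_kronecker_stag]
  rw [← inj.eq_iff]
  simp only [hU, hU', hA, hA']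
  exact cancel_iff hmul_e hinv_e hmul_o hinv_o comm

/-! ### Operator Schmidt rank one -/

/-- A unitary `A` on two cells that is turned into its adjoint by exchanging the cells (`hsymm`)
and has operator Schmidt rank one (`hrank`) is `± x ⊗ x†` with `x` unitary. -/
lemma exists_unitary_of_symm_of_rankOne {P : Type*} [Fintype P] [DecidableEq P] [Nonempty P]
    (A : Matrix (P × P) (P × P) ℂ)
    (hsymm : ∀ a b a' b', star (A (a', b') (a, b)) = A (b, a) (b', a'))
    (hrank : ∀ a a' b b' c c' e e', A (a, b) (a', b') * A (c, e) (c', e') =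
      A (a, e) (a', e') * A (c, b) (c', b'))
    (hA : A * Aᴴ = 1) :
    ∃ (x : Matrix P P ℂ) (σ : ℂ), x ∈ Matrix.unitaryGroup P ℂ ∧ (σ = 1 ∨ σ = -1) ∧
      A = σ • (x ⊗ₖ xᴴ) := by
  obtain ⟨p₀⟩ := ‹Nonempty P›
  obtain ⟨c, e, c', e', hne⟩ : ∃ c e c' e', A (c, e) (c', e') ≠ 0 := by
    by_contra! h
    have : A = 0 := by ext p q; exact h _ _ _ _
    rw [this, zero_mul] at hA
    simpa using congrFun (congrFun hA (p₀, p₀)) (p₀, p₀)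
  -- The slice at the transposed pair of operator indices has a nonzero (real) corner, since
  -- `|A (c, e) (c', e')|² = A (e', e) (e, e') * A (c, c') (c', c)`.
  have hr0 : A (e', e) (e, e') ≠ 0 := by
    intro h
    have h1 := hrank e' e c' c c c' e e'
    rw [h, zero_mul, ← hsymm, mul_eq_zero] at h1
    rcases h1 with h1 | h1
    · exact hne (star_eq_zero.mp h1)
    · exact hne h1
  obtain ⟨r, hr⟩ : ∃ r : ℝ, (r : ℂ) = A (e', e) (e, e') :=
    Complex.conj_eq_iff_real.mp (hsymm e e' e' e) |>.imp fun _ h => h.symm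
  rw [← hr] at hr0
  set X : Matrix P P ℂ := Matrix.of fun a a' => A (a, e) (a', e') with hX
  have hAX : A = (r : ℂ)⁻¹ • (X ⊗ₖ Xᴴ) := by
    ext ⟨a, b⟩ ⟨a', b'⟩
    have h1 := hrank a a' b b' e' e e e'
    rw [← hr, ← hsymm b e' b' e] at h1
    simp only [Matrix.smul_apply, Matrix.kroneckerMap_apply, hX, Matrix.conjTranspose_apply,
      Matrix.of_apply, smul_eq_mul]
    rw [eq_inv_mul_iff_mul_eq₀ hr0, mul_comm, h1]
  have key : ∀ a b, (X * Xᴴ) a b * (Xᴴ * X) p₀ p₀ = if a = b then (r : ℂ) ^ 2 else 0 := by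
    intro a b
    have h1 : ((r : ℂ)⁻¹ * (r : ℂ)⁻¹) • ((X * Xᴴ) ⊗ₖ (Xᴴ * X)) = 1 := by
      rw [← hA, hAX, Matrix.conjTranspose_smul, Matrix.conjTranspose_kronecker,
        Matrix.conjTranspose_conjTranspose, Matrix.smul_mul, Matrix.mul_smul, smul_smul,
        ← Matrix.mul_kronecker_mul]
      simp
    have h2 := congrFun (congrFun h1 (a, p₀)) (b, p₀)
    simp only [Matrix.smul_apply, Matrix.kroneckerMap_apply, Matrix.one_apply, smul_eq_mul,
      Prod.mk.injEq, and_true] at h2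
    split_ifs at h2 ⊢ with hab
    · field_simp at h2
      exact h2
    · simpa [hr0] using h2
  set K : ℝ := ∑ i, ‖X i p₀‖ ^ 2 with hK
  have hK' : (Xᴴ * X) p₀ p₀ = (K : ℂ) := by
    simp [hK, Matrix.mul_apply, Matrix.conjTranspose_apply, Complex.conj_mul']
  have hr0' : r ≠ 0 := by exact_mod_cast hr0
  have hK0 : 0 < K := by
    refine lt_of_le_of_ne (Finset.sum_nonneg fun i _ => sq_nonneg _) fun h => ?_
    have := key p₀ p₀
    rw [hK', ← h] at this
    exact pow_ne_zero 2 hr0 (by simpa using this.symm)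
  have hs : 0 < r ^ 2 / K := by positivity
  set q : ℝ := Real.sqrt (r ^ 2 / K) with hq
  have hq2 : (q : ℂ) * q = (r : ℂ) ^ 2 / K := by
    have := Real.mul_self_sqrt hs.le
    rw [← hq] at this
    exact_mod_cast this
  have hq0 : (q : ℂ) ≠ 0 := by exact_mod_cast (Real.sqrt_pos.mpr hs).ne'
  have hKc : (K : ℂ) ≠ 0 := by exact_mod_cast hK0.ne'
  have hXX : X * Xᴴ = ((q : ℂ) * q) • (1 : Matrix P P ℂ) := by
    ext a b
    have := key a b
    rw [hK'] at this
    rw [eq_div_of_mul_eq hKc this, hq2, Matrix.smul_apply, Matrix.one_apply]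
    split_ifs <;> simp
  have hx : ((q : ℂ)⁻¹ • X) * ((q : ℂ)⁻¹ • X)ᴴ = 1 := by
    rw [Matrix.conjTranspose_smul, Matrix.smul_mul, Matrix.mul_smul, hXX, smul_smul, smul_smul]
    simp only [star_inv₀, RCLike.star_def, Complex.conj_ofReal]
    rw [show (q : ℂ)⁻¹ * (q : ℂ)⁻¹ * (q * q) = 1 by field_simp, one_smul]
  obtain ⟨x, hxdef⟩ : ∃ x, x = (q : ℂ)⁻¹ • X := ⟨_, rfl⟩
  rw [← hxdef] at hx
  have hxu : x ∈ Matrix.unitaryGroup P ℂ := Matrix.mem_unitaryGroup_iff.mpr hx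
  have hAx : A = (((q * q / r : ℝ)) : ℂ) • (x ⊗ₖ xᴴ) := by
    rw [hAX, hxdef, Matrix.conjTranspose_smul, Matrix.smul_kronecker, Matrix.kronecker_smul,
      smul_smul, smul_smul]
    congr 1
    simp only [star_inv₀, RCLike.star_def, Complex.conj_ofReal]
    push_cast
    field_simp
  refine ⟨x, ((q * q / r : ℝ) : ℂ), hxu, ?_, hAx⟩
  have hx' : xᴴ * x = 1 := Matrix.mem_unitaryGroup_iff'.mp hxu
  have h1 := hA
  rw [hAx, Matrix.conjTranspose_smul, Matrix.conjTranspose_kronecker,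
    Matrix.conjTranspose_conjTranspose, Matrix.smul_mul, Matrix.mul_smul, smul_smul,
    ← Matrix.mul_kronecker_mul, hx, hx', Matrix.one_kronecker_one] at h1
  have h2 := congrFun (congrFun h1 (p₀, p₀)) (p₀, p₀)
  simp only [Matrix.smul_apply, Matrix.one_apply_eq, smul_eq_mul, mul_one, RCLike.star_def,
    Complex.conj_ofReal] at h2
  exact mul_self_eq_one_iff.mp h2

/-! ### The equivalence -/

/-- Multiplying by `v₂₃` on the right turns the relation of the theorem into a formula for
`v₂₃ u₁₂ u₃₄ v₂₃`. -/
lemma relation_iff {d : ℕ} {u v : Matrix (Fin d × Fin d) (Fin d × Fin d) ℂ}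
    (hv : v ∈ Matrix.unitaryGroup (Fin d × Fin d) ℂ)
    (x : Matrix (Fin d × Fin d) (Fin d × Fin d) ℂ) (σ : ℂ) :
    lay23 v * lay12 u * lay34 u = σ • (lay12 x * lay34 xᴴ * lay23 vᴴ) ↔
      core u v = σ • (x ⊗ₖ xᴴ) := by
  obtain ⟨h1, h2⟩ := lay23_unitary hv
  rw [mul_assoc, lay12_mul_lay34, lay12_mul_lay34, core]
  constructor
  · intro h
    rw [h, Matrix.smul_mul, mul_assoc, h2, mul_one]
  · intro h
    rw [← Matrix.smul_mul, ← h, mul_assoc, h1, mul_one]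

lemma piMat_smul {I κ : Type*} [Fintype κ] (σ : ℂ) (A : Matrix I I ℂ) :
    piMat κ (σ • A) = σ ^ Fintype.card κ • piMat κ A := by
  ext x y
  simp [piMat, Finset.prod_mul_distrib]

/-- The brickwork MPUs are self-adjoint (`U^{(N)} = U^{(N)†}`) for every even `N ≥ 2` iff
there are a unitary `x` on `ℂ^d⊗ℂ^d` and a sign `σ = ±1` such that
`v₂₃ u₁₂ u₃₄ = σ x₁₂ (x†)₃₄ (v†)₂₃`. -/
theorem stmt15 (d : ℕ) (hd : 1 ≤ d)
    (u v : Matrix (Fin d × Fin d) (Fin d × Fin d) ℂ)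
    (hu : u ∈ Matrix.unitaryGroup (Fin d × Fin d) ℂ)
    (hv : v ∈ Matrix.unitaryGroup (Fin d × Fin d) ℂ) :
    (∀ N : ℕ, 2 ≤ N → Even N → (brickwork d u v N)ᴴ = brickwork d u v N) ↔
    (∃ (x : Matrix (Fin d × Fin d) (Fin d × Fin d) ℂ) (σ : ℂ),
      x ∈ Matrix.unitaryGroup (Fin d × Fin d) ℂ ∧ (σ = 1 ∨ σ = -1) ∧
      lay23 v * lay12 u * lay34 u = σ • (lay12 x * lay34 xᴴ * lay23 vᴴ)) := by
  simp only [relation_iff hv]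
  constructor
  · intro h
    have h1 := (brickwork_selfAdjoint_iff (M := 1) hv).mp (h _ (by norm_num) (by decide))
    have h2 := (brickwork_selfAdjoint_iff (M := 2) hv).mp (h _ (by norm_num) (by decide))
    have hsymm : ∀ a b a' b', star (core u v (a', b') (a, b)) = core u v (b, a) (b', a') := by
      intro a b a' b'
      have := congrFun (congrFun h1 (fun _ => (a, b))) (fun _ => (a', b'))
      simpa [piMat, stag, Matrix.conjTranspose_apply] using this
    have hrank : ∀ a a' b b' c c' e e', core u v (a, b) (a', b') * core u v (c, e) (c', e') =
        core u v (a, e) (a', e') * core u v (c, b) (c', b') := by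
      intro a a' b b' c c' e e'
      have := congrFun (congrFun h2 ![(b, a), (e, c)]) ![(b', a'), (e', c')]
      have n0 : nextEquiv 2 0 = 1 := rfl
      have n1 : nextEquiv 2 1 = 0 := rfl
      simp only [piMat, stag, Matrix.conjTranspose_apply, Matrix.submatrix_apply, Matrix.of_apply,
        Fin.prod_univ_two, Equiv.coe_fn_mk, n0, n1, Matrix.cons_val_zero, Matrix.cons_val_one,
        hsymm] at this
      exact this
    have : Nonempty (Fin d × Fin d) := ⟨(⟨0, hd⟩, ⟨0, hd⟩)⟩
    exact exists_unitary_of_symm_of_rankOne _ hsymm hrank (core_mul_conjTranspose hu hv)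
  · rintro ⟨x, σ, -, hσ, h⟩ N - hN
    obtain ⟨M, rfl⟩ := hN
    rw [← mul_two, brickwork_selfAdjoint_iff hv, h, Matrix.conjTranspose_smul,
      Matrix.conjTranspose_kronecker, Matrix.conjTranspose_conjTranspose, piMat_smul, piMat_smul,
      Matrix.submatrix_smul, Pi.smul_apply, Pi.smul_apply, piMat_kronecker_stag]
    rcases hσ with rfl | rfl <;> simp
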